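/- Let 0 ≤ i ≤ j be integers with 2j + i ≤ n. Let R be the collection of all rows of the matrices W_{s,j} for 0 ≤ s ≤ i, regarded as vectors indexed by the standard j-element subsets of {1,…,n}. Then: (a) every integer vector lying in the ℚ-linear span of R already lies in the ℤ-linear span of R (the stacked matrix M_{i,j} has index 1); and (b) the ℚ-linear span of R has dimension μ_i(n) = C(n,i) − C(n,i−1). -/

import Mathlib

open scoped Classical

/-- Integer binomial coefficient with the convention `C x y = 0` unless `0 ≤ y ≤ x`. -/
noncomputable def C (x y : ℤ) : ℤ :=
  if 0 ≤ y ∧ y ≤ x then (x.toNat).choose y.toNat else 0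

/-- `μ_s(n) = C(n,s) − C(n,s−1)`. -/
noncomputable def mu (n : ℕ) (s : ℤ) : ℤ := C n s - C n (s - 1)

/-- A finset `β = {b₁ < b₂ < … < b_m}` of naturals is *standard* if `bᵢ ≥ 2i` for all `i`. -/
def IsStandard (β : Finset ℕ) : Prop :=
  ∀ i < β.card, 2 * (i + 1) ≤ (β.sort (· ≤ ·)).getD i 0

/-- The standard `k`-element subsets of `{1,…,n}`. -/
noncomputable def stdSets (n k : ℕ) : Finset (Finset ℕ) :=
  (Finset.Icc 1 n).powerset.filter fun β => IsStandard β ∧ β.card = k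

/-!
A row of `W_{s,j}` is the squarefree monomial `∏ a ∈ α, x_a`, regarded as a function on sets.

*Upper bound.* Each `j`-set containing `α` contains exactly `(j - #α).choose (i - #α)` of the
`i`-sets containing `α`; hence over a field of characteristic zero the rows of degree `i` span all
rows of lower degree. Rows of nonstandard sets vanish, since subsets of standard sets are standard.
So the rank is at most the number of standard `i`-sets, which the ballot recursion shows to be
`μ_i(n)`.

*Lower bound and saturation.* By induction on `n` there are `μ_i(n)` standard `j`-sets on which
every function is interpolated by a polynomial of degree at most `i` with coefficients in the
*given ring*: if `S` works for `(n, i, j + 1)` and `T` for `(n, i + 1, j)`, then `S` together with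
the sets `insert (n + 1) β`, `β ∈ T`, works for `(n + 1, i + 1, j + 1)`, as multiplication by
`1 - x_{n+1}` corrects the values on `S` without disturbing those on sets containing `n + 1`.
By the upper bound, restriction to these sets is injective on the span of the rows, so an integral
vector in the span is equal to its integral interpolant.
-/

open Finset

section InsertImage

variable {σ : Type*} [DecidableEq σ] {v : σ} {S T : Finset (Finset σ)}

lemma card_image_insert (hT : ∀ β ∈ T, v ∉ β) : #(T.image (insert v)) = #T := by
  have hinv : Set.LeftInvOn (fun β : Finset σ => β.erase v) (insert v) T :=
    fun β hβ => erase_insert (hT β hβ)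
  exact card_image_of_injOn hinv.injOn

lemma card_union_image_insert (hS : ∀ β ∈ S, v ∉ β) (hT : ∀ β ∈ T, v ∉ β) :
    #(S ∪ T.image (insert v)) = #S + #T := by
  have hdisj : Disjoint S (T.image (insert v)) := by
    refine disjoint_left.2 fun β hβ hβT => hS β hβ ?_
    obtain ⟨γ, -, rfl⟩ := mem_image.1 hβT
    exact mem_insert_self v γ
  rw [card_union_of_disjoint hdisj, card_image_insert hT]

end InsertImage

lemma card_filter_le_orderEmbOfFin {σ : Type*} [LinearOrder σ] {s : Finset σ} {k : ℕ}
    (h : #s = k) (i : Fin k) : #{x ∈ s | x ≤ s.orderEmbOfFin h i} = i + 1 := by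
  let e := s.orderEmbOfFin h
  calc #{x ∈ s | x ≤ e i} = #{x ∈ univ.map e.toEmbedding | x ≤ e i} := by
        rw [map_orderEmbOfFin_univ]
    _ = #(Iic i) := by
        rw [filter_map, card_map]
        congr 1
        ext l
        simp [e]
    _ = i + 1 := Fin.card_Iic i

section StandardSets

variable {n k : ℕ} {α β : Finset ℕ}

lemma isStandard_iff_forall_mem :
    IsStandard β ↔ ∀ b ∈ β, 2 * #{x ∈ β | x ≤ b} ≤ b := by
  let e := β.orderEmbOfFin rfl
  have sort_getD (i : Fin #β) : (β.sort (· ≤ ·)).getD i 0 = e i := by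
    rw [List.getD_eq_getElem _ _ (by simp), orderEmbOfFin_apply, Fin.getElem_fin]
  have card_le (i : Fin #β) : #{x ∈ β | x ≤ e i} = i + 1 := card_filter_le_orderEmbOfFin rfl i
  have hrange : Set.range e = β := range_orderEmbOfFin β rfl
  calc IsStandard β ↔ ∀ i : Fin #β, 2 * ((i : ℕ) + 1) ≤ (β.sort (· ≤ ·)).getD i 0 :=
        (Fin.forall_iff (p := fun i => 2 * ((i : ℕ) + 1) ≤ (β.sort (· ≤ ·)).getD i 0)).symm
    _ ↔ ∀ i : Fin #β, 2 * #{x ∈ β | x ≤ e i} ≤ e i := by simp only [sort_getD, card_le]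
    _ ↔ ∀ b ∈ β, 2 * #{x ∈ β | x ≤ b} ≤ b := by
        simp only [← mem_coe (s := β), ← hrange, Set.forall_mem_range]

lemma isStandard_empty : IsStandard ∅ := by simp [isStandard_iff_forall_mem]

lemma IsStandard.subset (hβ : IsStandard β) (hαβ : α ⊆ β) : IsStandard α := by
  rw [isStandard_iff_forall_mem] at hβ ⊢
  intro a ha
  calc 2 * #{x ∈ α | x ≤ a} ≤ 2 * #{x ∈ β | x ≤ a} := by gcongr
    _ ≤ a := hβ a (hαβ ha)

lemma isStandard_insert_iff (hβ : ∀ b ∈ β, b < n) :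
    IsStandard (insert n β) ↔ IsStandard β ∧ 2 * (#β + 1) ≤ n := by
  have hn : n ∉ β := fun h => (hβ n h).false
  have filter_n : {x ∈ insert n β | x ≤ n} = insert n β :=
    filter_true_of_mem (forall_mem_insert _ _ _ |>.2 ⟨le_rfl, fun b hb => (hβ b hb).le⟩)
  have filter_b : ∀ b ∈ β, {x ∈ insert n β | x ≤ b} = {x ∈ β | x ≤ b} := fun b hb => by
    rw [filter_insert, if_neg (hβ b hb).not_ge]
  rw [isStandard_iff_forall_mem, isStandard_iff_forall_mem, forall_mem_insert, filter_n,
    card_insert_of_notMem hn, and_comm]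
  exact and_congr_left' (forall₂_congr fun b hb => by rw [filter_b b hb])

lemma IsStandard.two_mul_card_le (hβ : IsStandard β) (hn : ∀ b ∈ β, b ≤ n) : 2 * #β ≤ n := by
  rcases β.eq_empty_or_nonempty with rfl | hne
  · simp
  have hmax := isStandard_iff_forall_mem.1 hβ _ (β.max'_mem hne)
  rw [filter_true_of_mem fun b hb => β.le_max' b hb] at hmax
  exact hmax.trans (hn _ (β.max'_mem hne))

lemma stdSets_eq_filter_powersetCard (n k : ℕ) :
    stdSets n k = {β ∈ (Icc 1 n).powersetCard k | IsStandard β} := by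
  simp only [stdSets, powersetCard_eq_filter, filter_filter, and_comm]

lemma mem_stdSets : β ∈ stdSets n k ↔ (β ⊆ Icc 1 n ∧ #β = k) ∧ IsStandard β := by
  rw [stdSets_eq_filter_powersetCard, mem_filter, mem_powersetCard]

lemma stdSets_subset_powersetCard (n k : ℕ) : stdSets n k ⊆ (Icc 1 n).powersetCard k := by
  rw [stdSets_eq_filter_powersetCard]
  exact filter_subset _ _

lemma succ_notMem_of_mem_stdSets (hβ : β ∈ stdSets n k) : n + 1 ∉ β := fun h => by
  simpa using (mem_stdSets.1 hβ).1.1 h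

lemma stdSets_zero (n : ℕ) : stdSets n 0 = {∅} := by
  rw [stdSets_eq_filter_powersetCard, powersetCard_zero, filter_singleton, if_pos isStandard_empty]

lemma stdSets_eq_empty (h : n < 2 * k) : stdSets n k = ∅ := by
  refine eq_empty_of_forall_notMem fun β hβ => h.not_ge ?_
  obtain ⟨⟨hβn, rfl⟩, hstd⟩ := mem_stdSets.1 hβ
  exact hstd.two_mul_card_le fun b hb => (mem_Icc.1 (hβn hb)).2

lemma insert_succ_Icc_one (n : ℕ) : insert (n + 1) (Icc 1 n) = Icc 1 (n + 1) :=
  insert_Icc_right_eq_Icc_succ (Nat.le_add_left 1 n)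

lemma stdSets_succ_succ (h : 2 * (k + 1) ≤ n + 1) :
    stdSets (n + 1) (k + 1) = stdSets n (k + 1) ∪ (stdSets n k).image (insert (n + 1)) := by
  have hinsert : ∀ β ∈ (Icc 1 n).powersetCard k,
      IsStandard (insert (n + 1) β) ↔ IsStandard β := fun β hβ => by
    obtain ⟨hβn, rfl⟩ := mem_powersetCard.1 hβ
    rw [isStandard_insert_iff fun b hb => Nat.lt_succ_of_le (mem_Icc.1 (hβn hb)).2,
      and_iff_left h]
  simp only [stdSets_eq_filter_powersetCard]
  rw [← insert_succ_Icc_one, powersetCard_succ_insert (by simp), filter_union, filter_image,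
    filter_congr hinsert]

lemma card_stdSets_succ_succ (h : 2 * (k + 1) ≤ n + 1) :
    #(stdSets (n + 1) (k + 1)) = #(stdSets n (k + 1)) + #(stdSets n k) := by
  rw [stdSets_succ_succ h]
  exact card_union_image_insert (fun _ => succ_notMem_of_mem_stdSets)
    fun _ => succ_notMem_of_mem_stdSets

lemma card_stdSets_succ_add_choose (h : 2 * (k + 1) ≤ n + 1) :
    #(stdSets n (k + 1)) + n.choose k = n.choose (k + 1) := by
  induction n generalizing k with
  | zero => omega
  | succ n ih =>
    rcases h.eq_or_lt with heq | hlt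
    · rw [stdSets_eq_empty (by omega), card_empty, zero_add]
      exact Nat.choose_symm_of_eq_add (by omega)
    · have hk := ih (k := k) (by omega)
      rw [card_stdSets_succ_succ (by omega), Nat.choose_succ_succ' n k]
      cases k with
      | zero =>
        simp only [stdSets_zero, card_singleton, Nat.choose_zero_right] at hk ⊢
        omega
      | succ k =>
        have hk' := ih (k := k) (by omega)
        rw [Nat.choose_succ_succ' n k]
        omega

lemma C_natCast (n k : ℕ) : C n k = n.choose k := by
  rcases le_or_gt k n with hkn | hnk
  · simp [C, hkn]
  · simp [C, hnk.not_ge, Nat.choose_eq_zero_of_lt hnk]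

theorem card_stdSets_eq_mu (h : 2 * k ≤ n) : (#(stdSets n k) : ℤ) = mu n k := by
  cases k with
  | zero => simp [stdSets_zero, mu, C]
  | succ k =>
    have hcard := card_stdSets_succ_add_choose (h.trans n.le_succ)
    have hpred : ((k + 1 : ℕ) : ℤ) - 1 = k := by simp
    rw [mu, hpred, C_natCast, C_natCast]
    omega

end StandardSets

section PolynomialFunctions

variable {σ : Type*} [DecidableEq σ]

/-- The squarefree monomial `∏ a ∈ α, x_a` as a function on finite sets, a set `β` being identified
with its indicator vector. -/
def monomialFun (A : Type*) [Zero A] [One A] (α β : Finset σ) : A := if α ⊆ β then 1 else 0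

/-- The functions on finite sets given by polynomials of degree at most `d` in the variables `x_a`,
`a ∈ V`, with coefficients in `A`. Squarefree monomials suffice since `x_a² = x_a` on indicator
vectors. -/
def polynomialFun (A : Type*) [CommSemiring A] (V : Finset σ) (d : ℕ) :
    Submodule A (Finset σ → A) :=
  Submodule.span A (monomialFun A '' {α | α ⊆ V ∧ #α ≤ d})

/-- A family `S` of sets is interpolating in degree `d` if every function on `S` extends to a
polynomial function of degree at most `d`, with coefficients in the same ring `A`. -/
def IsInterpolating (A : Type*) [CommSemiring A] (V : Finset σ) (d : ℕ)
    (S : Finset (Finset σ)) : Prop :=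
  ∀ c : Finset σ → A, ∃ f ∈ polynomialFun A V d, Set.EqOn f c S

section CommSemiring

variable {A : Type*} [CommSemiring A] {V W : Finset σ} {d e : ℕ} {α β : Finset σ} {v : σ}
  {f : Finset σ → A} {S : Finset (Finset σ)}

lemma monomialFun_mul_monomialFun (α β : Finset σ) :
    monomialFun A α * monomialFun A β = monomialFun A (α ∪ β) := by
  ext γ
  simp [monomialFun, union_subset_iff, ← ite_and, and_comm]

lemma monomialFun_mem_polynomialFun (hα : α ⊆ V) (hd : #α ≤ d) :
    monomialFun A α ∈ polynomialFun A V d :=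
  Submodule.subset_span ⟨α, ⟨hα, hd⟩, rfl⟩

lemma polynomialFun_mono (hVW : V ⊆ W) (hde : d ≤ e) :
    polynomialFun A V d ≤ polynomialFun A W e :=
  Submodule.span_mono (Set.image_mono fun _ hα => ⟨hα.1.trans hVW, hα.2.trans hde⟩)

lemma apply_insert_of_mem_polynomialFun (hf : f ∈ polynomialFun A V d) (hv : v ∉ V)
    (β : Finset σ) : f (insert v β) = f β := by
  refine LinearMap.eqOn_span (f := LinearMap.proj (insert v β)) (g := LinearMap.proj β) ?_ hf
  rintro _ ⟨α, ⟨hα, -⟩, rfl⟩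
  simp [monomialFun, subset_insert_iff_of_notMem (notMem_mono hα hv)]

lemma isInterpolating_of_isAntichain (hS : IsAntichain (· ⊆ ·) (S : Set (Finset σ)))
    (hV : ∀ β ∈ S, β ⊆ V) (hd : ∀ β ∈ S, #β ≤ d) : IsInterpolating A V d S := by
  refine fun c => ⟨∑ α ∈ S, c α • monomialFun A α, ?_, fun β hβ => ?_⟩
  · exact sum_mem fun α hα =>
      Submodule.smul_mem _ _ (monomialFun_mem_polynomialFun (hV α hα) (hd α hα))
  · have hoff : ∀ α ∈ S, α ≠ β → c α • monomialFun A α β = 0 := fun α hα hne => by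
      have hαβ : ¬ α ⊆ β := hS hα hβ hne
      simp [monomialFun, hαβ]
    simp only [Finset.sum_apply, Pi.smul_apply]
    rw [sum_eq_single_of_mem β hβ hoff]
    simp [monomialFun]

lemma IsInterpolating.image_insert (hS : IsInterpolating A V d S) (hv : v ∉ V) :
    IsInterpolating A (insert v V) d (S.image (insert v)) := by
  intro c
  obtain ⟨f, hf, hfc⟩ := hS fun β => c (insert v β)
  refine ⟨f, polynomialFun_mono (subset_insert v V) le_rfl hf, fun γ hγ => ?_⟩
  obtain ⟨β, hβ, rfl⟩ := mem_image.1 hγ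
  rw [apply_insert_of_mem_polynomialFun hf hv, hfc hβ]

end CommSemiring

section CommRing

variable {A : Type*} [CommRing A] {V : Finset σ} {d : ℕ} {v : σ} {f : Finset σ → A}
  {S T : Finset (Finset σ)}

lemma one_sub_monomialFun_singleton_mul_mem (v : σ) (hf : f ∈ polynomialFun A V d) :
    (1 - monomialFun A {v}) * f ∈ polynomialFun A (insert v V) (d + 1) := by
  suffices h : polynomialFun A V d ≤ (polynomialFun A (insert v V) (d + 1)).comap
      (LinearMap.mulLeft A (1 - monomialFun A {v})) from h hf
  refine Submodule.span_le.2 ?_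
  rintro _ ⟨α, ⟨hα, hd⟩, rfl⟩
  change (1 - monomialFun A {v}) * monomialFun A α ∈ polynomialFun A (insert v V) (d + 1)
  rw [sub_mul, one_mul, monomialFun_mul_monomialFun, singleton_union]
  exact sub_mem
    (monomialFun_mem_polynomialFun (hα.trans (subset_insert v V)) (hd.trans d.le_succ))
    (monomialFun_mem_polynomialFun (insert_subset_insert v hα)
      ((card_insert_le v α).trans (Nat.succ_le_succ hd)))

lemma IsInterpolating.union (hS : IsInterpolating A V d S)
    (hT : IsInterpolating A (insert v V) (d + 1) T) (hvS : ∀ β ∈ S, v ∉ β)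
    (hvT : ∀ β ∈ T, v ∈ β) : IsInterpolating A (insert v V) (d + 1) (S ∪ T) := by
  intro c
  obtain ⟨g, hg, hgc⟩ := hT c
  obtain ⟨f, hf, hfc⟩ := hS (c - g)
  refine ⟨g + (1 - monomialFun A {v}) * f,
    add_mem hg (one_sub_monomialFun_singleton_mul_mem v hf), fun β hβ => ?_⟩
  rcases mem_union.1 hβ with hβ | hβ
  · simp [monomialFun, hvS β hβ, hfc hβ]
  · simp [monomialFun, hvT β hβ, hgc hβ]

end CommRing

end PolynomialFunctions

lemma isInterpolating_stdSets (A : Type*) [CommSemiring A] (n k : ℕ) :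
    IsInterpolating A (Icc 1 n) k (stdSets n k) := by
  have hsized : (stdSets n k : Set (Finset ℕ)).Sized k := fun _ hβ => (mem_stdSets.1 hβ).1.2
  exact isInterpolating_of_isAntichain hsized.isAntichain (fun _ hβ => (mem_stdSets.1 hβ).1.1)
    fun _ hβ => (hsized hβ).le

theorem exists_isInterpolating_subset_stdSets (A : Type*) [CommRing A] {n i j : ℕ} (hij : i ≤ j)
    (h : 2 * j + i ≤ n) :
    ∃ S ⊆ stdSets n j, #S = #(stdSets n i) ∧ IsInterpolating A (Icc 1 n) i S := by
  induction n generalizing i j with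
  | zero =>
    obtain rfl : i = j := by omega
    exact ⟨stdSets 0 i, subset_rfl, rfl, isInterpolating_stdSets A 0 i⟩
  | succ n ih =>
    rcases hij.eq_or_lt with rfl | hlt
    · exact ⟨stdSets (n + 1) i, subset_rfl, rfl, isInterpolating_stdSets A (n + 1) i⟩
    obtain ⟨j, rfl⟩ : ∃ j', j = j' + 1 := Nat.exists_eq_succ_of_ne_zero (by omega)
    obtain ⟨T, hT, cardT, interpT⟩ := ih (i := i) (j := j) (by omega) (by omega)
    have hvT : ∀ β ∈ T, n + 1 ∉ β := fun β hβ => succ_notMem_of_mem_stdSets (hT hβ)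
    have interpT' := interpT.image_insert (v := n + 1) (by simp)
    rw [stdSets_succ_succ (by omega), ← insert_succ_Icc_one]
    cases i with
    | zero =>
      exact ⟨T.image (insert (n + 1)), (image_subset_image hT).trans subset_union_right,
        by rw [card_image_insert hvT, cardT, stdSets_zero, stdSets_zero], interpT'⟩
    | succ i =>
      obtain ⟨S, hS, cardS, interpS⟩ := ih (i := i) (j := j + 1) (by omega) (by omega)
      have hvS : ∀ β ∈ S, n + 1 ∉ β := fun β hβ => succ_notMem_of_mem_stdSets (hS hβ)
      refine ⟨S ∪ T.image (insert (n + 1)), union_subset_union hS (image_subset_image hT), ?_,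
        interpS.union interpT' hvS fun β hβ => ?_⟩
      · rw [card_union_image_insert hvS hvT, cardS, cardT, card_stdSets_succ_succ (by omega),
          add_comm]
      · obtain ⟨γ, -, rfl⟩ := mem_image.1 hβ
        exact mem_insert_self (n + 1) γ

section InclusionMatrix

variable {σ : Type*} [DecidableEq σ]

/-- The row of `α` in the inclusion matrix with columns indexed by the family `F`. -/
def inclusionRow (K : Type*) [Zero K] [One K] (F : Finset (Finset σ)) (α : Finset σ) : F → K :=
  fun β => monomialFun K α β

lemma choose_smul_inclusionRow (K : Type*) [Semiring K] {F : Finset (Finset σ)} {V : Finset σ}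
    {i j : ℕ} (hF : F ⊆ V.powersetCard j) {α : Finset σ} (hα : #α ≤ i) :
    (j - #α).choose (i - #α) • inclusionRow K F α =
      ∑ γ ∈ V.powersetCard i with α ⊆ γ, inclusionRow K F γ := by
  ext ⟨β, hβ⟩
  obtain ⟨hβV, rfl⟩ := mem_powersetCard.1 (hF hβ)
  have hfilter : {γ ∈ {γ ∈ V.powersetCard i | α ⊆ γ} | γ ⊆ β} =
      {γ ∈ β.powersetCard i | α ⊆ γ} := by
    ext γ
    simp only [mem_filter, mem_powersetCard]
    exact ⟨fun h => ⟨⟨h.2, h.1.1.2⟩, h.1.2⟩, fun h => ⟨⟨⟨h.1.1.trans hβV, h.1.2⟩, h.2⟩, h.1.1⟩⟩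
  simp only [Pi.smul_apply, Finset.sum_apply, inclusionRow, monomialFun]
  rw [sum_boole, hfilter]
  by_cases hαβ : α ⊆ β
  · rw [if_pos hαβ, card_filter_powersetCard_subset α β i hαβ hα, nsmul_one]
  · have hempty : {γ ∈ β.powersetCard i | α ⊆ γ} = ∅ :=
      filter_false_of_mem fun γ hγ hαγ => hαβ (hαγ.trans (mem_powersetCard.1 hγ).1)
    rw [if_neg hαβ, smul_zero, hempty, card_empty, Nat.cast_zero]

lemma inclusionRow_mem_span_powersetCard {K : Type*} [Field K] [CharZero K]
    {F : Finset (Finset σ)} {V : Finset σ} {i j : ℕ} (hF : F ⊆ V.powersetCard j) (hij : i ≤ j)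
    {α : Finset σ} (hα : #α ≤ i) :
    inclusionRow K F α ∈ Submodule.span K (inclusionRow K F '' V.powersetCard i) := by
  have hchoose : ((j - #α).choose (i - #α) : K) ≠ 0 :=
    Nat.cast_ne_zero.2 (Nat.choose_pos (Nat.sub_le_sub_right hij _)).ne'
  rw [← Submodule.smul_mem_iff _ hchoose, Nat.cast_smul_eq_nsmul, choose_smul_inclusionRow K hF hα]
  exact sum_mem fun γ hγ => Submodule.subset_span ⟨γ, (mem_filter.1 hγ).1, rfl⟩

end InclusionMatrix

section StandardRows

/-- The rows of the matrices `W_{s,j}`, `0 ≤ s ≤ i`, with entries in `K`. -/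
def stdRows (K : Type*) [Zero K] [One K] (n i j : ℕ) : Set (stdSets n j → K) :=
  {x | ∃ s, s ≤ i ∧ ∃ α ∈ stdSets n s, x = inclusionRow K (stdSets n j) α}

variable {K : Type*} {n i j : ℕ}

lemma inclusionRow_stdSets_eq_zero [Zero K] [One K] {α : Finset ℕ} (hα : ¬ IsStandard α) :
    inclusionRow K (stdSets n j) α = 0 := by
  ext β
  exact if_neg fun hαβ => hα ((mem_stdSets.1 β.2).2.subset hαβ)

lemma finrank_span_stdRows_le [Field K] [CharZero K] (hij : i ≤ j) :
    Module.finrank K (Submodule.span K (stdRows K n i j)) ≤ #(stdSets n i) := by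
  have hspan : Submodule.span K (stdRows K n i j) ≤
      Submodule.span K ((stdSets n i).image (inclusionRow K (stdSets n j))) := by
    refine Submodule.span_le.2 ?_
    rintro _ ⟨s, hs, α, hα, rfl⟩
    have hcard : #α ≤ i := (mem_stdSets.1 hα).1.2.trans_le hs
    refine Submodule.span_le.2 ?_ (inclusionRow_mem_span_powersetCard
      (stdSets_subset_powersetCard n j) hij hcard)
    rintro _ ⟨γ, hγ, rfl⟩
    by_cases hstd : IsStandard γ
    · exact Submodule.subset_span
        (mem_image_of_mem _ (mem_stdSets.2 ⟨mem_powersetCard.1 hγ, hstd⟩))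
    · rw [inclusionRow_stdSets_eq_zero hstd]
      exact zero_mem _
  calc Module.finrank K (Submodule.span K (stdRows K n i j))
      ≤ #((stdSets n i).image (inclusionRow K (stdSets n j))) :=
        (Submodule.finrank_mono hspan).trans (finrank_span_finset_le_card _)
    _ ≤ #(stdSets n i) := card_image_le

variable {A : Type*} [CommRing A] [Field K] [Algebra A K]

lemma algebraMap_comp_mem_span_stdRows {f : Finset ℕ → A} (hf : f ∈ polynomialFun A (Icc 1 n) i) :
    (fun β : stdSets n j => algebraMap A K (f β)) ∈ Submodule.span A (stdRows K n i j) := by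
  let restrict : (Finset ℕ → A) →ₗ[A] (stdSets n j → K) :=
    (Algebra.linearMap A K).compLeft (stdSets n j) ∘ₗ LinearMap.funLeft A A Subtype.val
  suffices h : polynomialFun A (Icc 1 n) i ≤
      (Submodule.span A (stdRows K n i j)).comap restrict from h hf
  refine Submodule.span_le.2 ?_
  rintro _ ⟨α, ⟨hαn, hαi⟩, rfl⟩
  have hrow : restrict (monomialFun A α) = inclusionRow K (stdSets n j) α := by
    ext β
    simp [restrict, LinearMap.funLeft, inclusionRow, monomialFun, apply_ite (algebraMap A K)]
  change restrict (monomialFun A α) ∈ Submodule.span A (stdRows K n i j)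
  rw [hrow]
  by_cases hstd : IsStandard α
  · exact Submodule.subset_span ⟨#α, hαi, α, mem_stdSets.2 ⟨⟨hαn, rfl⟩, hstd⟩, rfl⟩
  · rw [inclusionRow_stdSets_eq_zero hstd]
    exact zero_mem _

lemma IsInterpolating.exists_mem_span_stdRows {S : Finset (Finset ℕ)}
    (hS : IsInterpolating A (Icc 1 n) i S) (hSj : S ⊆ stdSets n j) (c : S → A) :
    ∃ y ∈ Submodule.span A (stdRows K n i j),
      ∀ β : S, y (Set.inclusion hSj β) = algebraMap A K (c β) := by
  obtain ⟨f, hf, hfc⟩ := hS (Function.extend Subtype.val c 0)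
  refine ⟨_, algebraMap_comp_mem_span_stdRows hf, fun β => ?_⟩
  change algebraMap A K (f β) = algebraMap A K (c β)
  rw [hfc β.2, Subtype.val_injective.extend_apply]

end StandardRows

section Saturation

variable {A K ι τ : Type*} [CommRing A] [Field K] [Algebra A K] {R : Set (ι → K)} {e : τ → ι}

lemma surjective_funLeft_domRestrict_span [Finite τ]
    (hlift : ∀ c : τ → A, ∃ y ∈ Submodule.span A R, ∀ t, y (e t) = algebraMap A K (c t)) :
    Function.Surjective ((LinearMap.funLeft K K e).domRestrict (Submodule.span K R)) := by
  rw [← LinearMap.range_eq_top, eq_top_iff, ← (Pi.basisFun K τ).span_eq, Submodule.span_le]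
  rintro _ ⟨t, rfl⟩
  obtain ⟨y, hy, hyt⟩ := hlift (Pi.single t 1)
  refine ⟨⟨y, Submodule.span_le_restrictScalars A K R hy⟩, ?_⟩
  ext u
  simp [LinearMap.funLeft, hyt, Pi.single_apply, apply_ite (algebraMap A K)]

variable [Finite ι] [Fintype τ]

theorem finrank_span_eq_card_of_forall_lift
    (hlift : ∀ c : τ → A, ∃ y ∈ Submodule.span A R, ∀ t, y (e t) = algebraMap A K (c t))
    (hrank : Module.finrank K (Submodule.span K R) ≤ Fintype.card τ) :
    Module.finrank K (Submodule.span K R) = Fintype.card τ := by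
  refine hrank.antisymm ?_
  rw [← Module.finrank_fintype_fun_eq_card K]
  exact LinearMap.finrank_le_finrank_of_surjective (surjective_funLeft_domRestrict_span hlift)

theorem mem_span_of_forall_lift
    (hlift : ∀ c : τ → A, ∃ y ∈ Submodule.span A R, ∀ t, y (e t) = algebraMap A K (c t))
    (hrank : Module.finrank K (Submodule.span K R) ≤ Fintype.card τ)
    {x : ι → K} (hx : x ∈ Submodule.span K R) (hxA : ∀ t, ∃ a : A, x (e t) = algebraMap A K a) :
    x ∈ Submodule.span A R := by
  choose c hc using hxA
  obtain ⟨y, hy, hyc⟩ := hlift c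
  have hinj : Function.Injective
      ((LinearMap.funLeft K K e).domRestrict (Submodule.span K R)) := by
    refine (LinearMap.injective_iff_surjective_of_finrank_eq_finrank ?_).2
      (surjective_funLeft_domRestrict_span hlift)
    rw [finrank_span_eq_card_of_forall_lift hlift hrank, Module.finrank_fintype_fun_eq_card]
  have hxy : (⟨x, hx⟩ : Submodule.span K R) =
      ⟨y, Submodule.span_le_restrictScalars A K R hy⟩ :=
    hinj (funext fun t => (hc t).trans (hyc t).symm)
  rwa [Subtype.mk_eq_mk.1 hxy]

end Saturation

theorem statement6_general (A K : Type*) [CommRing A] [Field K] [CharZero K] [Algebra A K]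
    {n i j : ℕ} (hij : i ≤ j) (h : 2 * j + i ≤ n) :
    (∀ x ∈ Submodule.span K (stdRows K n i j), (∀ β, ∃ a : A, x β = algebraMap A K a) →
      x ∈ Submodule.span A (stdRows K n i j)) ∧
    (Module.finrank K (Submodule.span K (stdRows K n i j)) : ℤ) = mu n i := by
  obtain ⟨S, hSj, hcard, hS⟩ := exists_isInterpolating_subset_stdSets A hij h
  have hlift := hS.exists_mem_span_stdRows (K := K) hSj
  have hrank : Module.finrank K (Submodule.span K (stdRows K n i j)) ≤ Fintype.card S := by
    rw [Fintype.card_coe, hcard]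
    exact finrank_span_stdRows_le hij
  refine ⟨fun x hx hxA => mem_span_of_forall_lift hlift hrank hx fun β => hxA _, ?_⟩
  rw [finrank_span_eq_card_of_forall_lift hlift hrank, Fintype.card_coe, hcard,
    card_stdSets_eq_mu (by omega)]

/-- `R` is the collection of all rows of the matrices `W_{s,j}` for `0 ≤ s ≤ i`,
regarded as vectors indexed by the standard `j`-subsets.  Then (a) every integer
vector in the ℚ-span of `R` lies in the ℤ-span of `R`, and (b) the ℚ-span of `R`
has dimension `μ_i(n)`. -/
theorem statement6 (n i j : ℕ) (hij : i ≤ j) (h : 2 * j + i ≤ n)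
    (R : Set (↥(stdSets n j) → ℚ))
    (hR : R = {x | ∃ s, s ≤ i ∧ ∃ α ∈ stdSets n s,
      x = fun β : ↥(stdSets n j) =>
        (if α ⊆ (β : Finset ℕ) then 1 else 0 : ℚ)}) :
    (∀ x ∈ Submodule.span ℚ R, (∀ β, ∃ m : ℤ, x β = (m : ℚ)) →
        x ∈ Submodule.span ℤ R) ∧
    ((Module.finrank ℚ (Submodule.span ℚ R) : ℤ) = mu n i) := by
  subst hR
  exact statement6_general ℤ ℚ hij h
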